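/- Let k ≥ 2 and n ≥ 1 be integers, let P be the uniform distribution on [k], and let Ĥ_plug(N) = Σ_{i=1}^k (N_i/n)·log(n/N_i) be the plug-in estimator computed from the histogram N of n i.i.d. samples from P. Then H(P) − E[Ĥ_plug(N)] ≥ 2·(1−1/k)^{2n} if n < k, and H(P) − E[Ĥ_plug(N)] ≥ (k/(4n))·(1−1/k) if n ≥ k. -/

import Mathlib

/-!
The bias of the plug-in estimator is the expected relative entropy of the empirical distribution
from `P`, that is `∑ i, P i * E[x log x]` with `x = N i / (n * P i)`. Two pointwise lower bounds on
`x log x` turn this into moments of the binomial variable `N i`. The tangent line of `x log x` for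
`x > 0`, combined with the exact value `0` at `x = 0`, gives `-log (1 - (1 - P i) ^ n)` at the
optimal slope. The Taylor cubic at `x = 1` lies below `x log x` on `[0, ∞)` and only needs the first
three moments, which are read off the coefficients of `E[(1 + X) ^ N i] = (1 + P i X) ^ n`.
-/

open scoped BigOperators
open Real

noncomputable section

/-- The set of probability vectors on `Fin k`. -/
def probVec (k : ℕ) : Set (Fin k → ℝ) := {P | (∀ i, 0 ≤ P i) ∧ (∑ i, P i) = 1}

/-- Shannon entropy `H(P) = ∑ pᵢ log (1/pᵢ)` (natural log, `0·log(1/0) = 0`). -/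
def entropy {k : ℕ} (P : Fin k → ℝ) : ℝ := ∑ i, P i * Real.log (1 / P i)

/-- The multinomial probability mass function of the histogram `N` of `n` i.i.d. samples
from `P`. -/
def multinomialPMF {k : ℕ} (n : ℕ) (P : Fin k → ℝ) (N : Fin k → ℕ) : ℝ :=
  if (∑ i, N i) = n then
    (n.factorial : ℝ) / (∏ i, ((N i).factorial : ℝ)) * ∏ i, P i ^ (N i)
  else 0

/-- Mean squared error of the estimator `est` of the entropy, from the histogram of
`n` i.i.d. samples of `P`. -/
def mseIID {k : ℕ} (n : ℕ) (P : Fin k → ℝ) (est : (Fin k → ℕ) → ℝ) : ℝ :=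
  ∑' N : Fin k → ℕ, multinomialPMF n P N * (est N - entropy P) ^ 2


/-- The plug-in (empirical entropy) estimator from a histogram of `n` samples. -/
def plugIn {k : ℕ} (n : ℕ) (N : Fin k → ℕ) : ℝ :=
  ∑ i, ((N i : ℝ) / n) * Real.log ((n : ℝ) / (N i))

section Multinomial

open Finset

variable {k n : ℕ} {P : Fin k → ℝ}

lemma multinomialPMF_of_sum_eq {N : Fin k → ℕ} (hN : ∑ i, N i = n) :
    multinomialPMF n P N = Nat.multinomial univ N * ∏ i, P i ^ N i := by
  have hspec : (∏ i, ((N i).factorial : ℝ)) * Nat.multinomial univ N = n.factorial := by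
    exact_mod_cast hN ▸ Nat.multinomial_spec univ N
  have hprod : ∏ i, ((N i).factorial : ℝ) ≠ 0 := by positivity
  rw [multinomialPMF, if_pos hN, ← hspec, mul_div_cancel_left₀ _ hprod]

lemma multinomialPMF_of_sum_ne {N : Fin k → ℕ} (hN : ∑ i, N i ≠ n) :
    multinomialPMF n P N = 0 :=
  if_neg hN

lemma multinomialPMF_nonneg (hP : ∀ i, 0 ≤ P i) (N : Fin k → ℕ) : 0 ≤ multinomialPMF n P N := by
  by_cases hN : ∑ i, N i = n
  · rw [multinomialPMF_of_sum_eq hN]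
    exact mul_nonneg (Nat.cast_nonneg _) (prod_nonneg fun i _ => pow_nonneg (hP i) _)
  · exact (multinomialPMF_of_sum_ne hN).ge

lemma multinomialPMF_eq_zero_of_apply_eq_zero {N : Fin k → ℕ} {i : Fin k} (hPi : P i = 0)
    (hNi : N i ≠ 0) : multinomialPMF n P N = 0 := by
  by_cases hN : ∑ i, N i = n
  · rw [multinomialPMF_of_sum_eq hN, prod_eq_zero (mem_univ i) (by rw [hPi, zero_pow hNi]),
      mul_zero]
  · exact multinomialPMF_of_sum_ne hN

variable (n P) in
/-- Expectation of a function of the histogram of `n` samples from `P`. It is a finite sum over the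
histograms of total count `n`, and a linear functional for every real vector `P`. -/
def multinomialExpectation : ((Fin k → ℕ) → ℝ) →ₗ[ℝ] ℝ :=
  ∑ N ∈ piAntidiag univ n, multinomialPMF n P N • LinearMap.proj N

lemma multinomialExpectation_apply (f : (Fin k → ℕ) → ℝ) :
    multinomialExpectation n P f = ∑ N ∈ piAntidiag univ n, multinomialPMF n P N * f N := by
  simp [multinomialExpectation]

lemma tsum_multinomialPMF_mul (f : (Fin k → ℕ) → ℝ) :
    ∑' N, multinomialPMF n P N * f N = multinomialExpectation n P f := by
  rw [multinomialExpectation_apply]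
  refine tsum_eq_sum fun N hN => ?_
  rw [multinomialPMF_of_sum_ne (by simpa using hN), zero_mul]

lemma multinomialExpectation_mono (hP : ∀ i, 0 ≤ P i) {f g : (Fin k → ℕ) → ℝ} (hfg : f ≤ g) :
    multinomialExpectation n P f ≤ multinomialExpectation n P g := by
  simp only [multinomialExpectation_apply]
  exact sum_le_sum fun N _ => mul_le_mul_of_nonneg_left (hfg N) (multinomialPMF_nonneg hP N)

lemma sum_multinomialPMF_smul_prod_pow {A : Type*} [CommSemiring A] [Algebra ℝ A]
    (t : Fin k → A) :
    ∑ N ∈ piAntidiag univ n, multinomialPMF n P N • ∏ i, t i ^ N i = (∑ i, P i • t i) ^ n := by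
  rw [sum_pow_eq_sum_piAntidiag]
  refine sum_congr rfl fun N hN => ?_
  rw [multinomialPMF_of_sum_eq (by simpa using hN)]
  simp only [smul_pow, prod_smul, mul_smul, Nat.cast_smul_eq_nsmul, nsmul_eq_mul]

lemma sum_multinomialPMF_smul_one_add_pow {A : Type*} [CommSemiring A] [Algebra ℝ A]
    (hP : ∑ i, P i = 1) (i : Fin k) (s : A) :
    ∑ N ∈ piAntidiag univ n, multinomialPMF n P N • (1 + s) ^ N i = (1 + P i • s) ^ n := by
  have hprod (N : Fin k → ℕ) : ∏ j, (1 + (Pi.single i s : Fin k → A) j) ^ N j = (1 + s) ^ N i := by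
    rw [Fintype.prod_eq_single i fun j hj => by simp [hj], Pi.single_eq_same]
  have hsum : ∑ j, P j • (1 + (Pi.single i s : Fin k → A) j) = 1 + P i • s := by
    simp only [smul_add, sum_add_distrib, ← sum_smul, hP, one_smul]
    rw [Fintype.sum_eq_single i fun j hj => by simp [hj], Pi.single_eq_same]
  simp only [← hprod, ← hsum, sum_multinomialPMF_smul_prod_pow]

end Multinomial

section Moments

variable {k n : ℕ} {P : Fin k → ℝ}

lemma multinomialExpectation_choose (hP : ∑ i, P i = 1) (i : Fin k) (r : ℕ) :
    multinomialExpectation n P (fun N => ((N i).choose r : ℝ)) = n.choose r * P i ^ r := by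
  have hcoeff : ((1 + P i • Polynomial.X) ^ n : Polynomial ℝ).coeff r = n.choose r * P i ^ r := by
    rw [← Polynomial.coeff_one_add_X_pow, ← Polynomial.comp_C_mul_X_coeff]
    simp [Polynomial.smul_eq_C_mul]
  rw [multinomialExpectation_apply, ← hcoeff, ← sum_multinomialPMF_smul_one_add_pow hP]
  simp [Polynomial.coeff_one_add_X_pow]

lemma multinomialExpectation_one (hP : ∑ i, P i = 1) : multinomialExpectation n P 1 = 1 := by
  simpa [multinomialExpectation_apply, hP] using
    sum_multinomialPMF_smul_prod_pow (n := n) (P := P) (1 : Fin k → ℝ)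

lemma multinomialExpectation_count (hP : ∑ i, P i = 1) (i : Fin k) :
    multinomialExpectation n P (fun N => (N i : ℝ)) = n * P i := by
  simpa using multinomialExpectation_choose (n := n) hP i 1

lemma multinomialExpectation_zero_pow_count (hP : ∑ i, P i = 1) (i : Fin k) :
    multinomialExpectation n P (fun N => 0 ^ N i) = (1 - P i) ^ n := by
  have h := sum_multinomialPMF_smul_one_add_pow (n := n) hP i (-1 : ℝ)
  simpa [multinomialExpectation_apply, sub_eq_add_neg] using h

lemma cast_choose_three {K : Type*} [Field K] [CharZero K] (m : ℕ) :
    (m.choose 3 : K) = m * (m - 1) * (m - 2) / 6 := by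
  induction m with
  | zero => simp
  | succ m ih =>
    rw [Nat.choose_succ_succ, Nat.cast_add, ih, Nat.cast_choose_two]
    push_cast
    ring

lemma multinomialExpectation_count_sub_mean_sq (hP : ∑ i, P i = 1) (i : Fin k) :
    multinomialExpectation n P (fun N => (N i - n * P i) ^ 2) = n * P i * (1 - P i) := by
  have hexpand : (fun N : Fin k → ℕ => ((N i : ℝ) - n * P i) ^ 2) =
      (2 : ℝ) • (fun N => ((N i).choose 2 : ℝ)) + (1 - 2 * (n * P i)) • (fun N => (N i : ℝ)) +
        (n * P i) ^ 2 • 1 := by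
    ext N
    simp only [Pi.add_apply, Pi.smul_apply, Pi.one_apply, smul_eq_mul, Nat.cast_choose_two]
    ring
  simp only [hexpand, map_add, map_smul, smul_eq_mul, multinomialExpectation_choose hP,
    multinomialExpectation_count hP, multinomialExpectation_one hP]
  rw [Nat.cast_choose_two]
  ring

lemma multinomialExpectation_count_sub_mean_cube (hP : ∑ i, P i = 1) (i : Fin k) :
    multinomialExpectation n P (fun N => (N i - n * P i) ^ 3) =
      n * P i * (1 - P i) * (1 - 2 * P i) := by
  have hexpand : (fun N : Fin k → ℕ => ((N i : ℝ) - n * P i) ^ 3) =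
      (6 : ℝ) • (fun N => ((N i).choose 3 : ℝ)) +
        (6 - 6 * (n * P i)) • (fun N => ((N i).choose 2 : ℝ)) +
        (1 - 3 * (n * P i) + 3 * (n * P i) ^ 2) • (fun N => (N i : ℝ)) + (-(n * P i) ^ 3) • 1 := by
    ext N
    simp only [Pi.add_apply, Pi.smul_apply, Pi.one_apply, smul_eq_mul, Nat.cast_choose_two,
      cast_choose_three]
    ring
  simp only [hexpand, map_add, map_smul, smul_eq_mul, multinomialExpectation_choose hP,
    multinomialExpectation_count hP, multinomialExpectation_one hP]
  rw [Nat.cast_choose_two, cast_choose_three]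
  ring

end Moments

section RealInequalities

open Finset

lemma two_mul_sq_le_neg_log_one_sub {u : ℝ} (hu0 : 0 ≤ u) (hu1 : u < 1) :
    2 * u ^ 2 ≤ -log (1 - u) := by
  have hseries := hasSum_pow_div_log_of_abs_lt_one (abs_lt.2 ⟨by linarith, hu1⟩ : |u| < 1)
  calc 2 * u ^ 2 ≤ ∑ j ∈ range 4, u ^ (j + 1) / (j + 1) := by
        have hcubic : 0 ≤ 1 - 3 / 2 * u + u ^ 2 / 3 + u ^ 3 / 4 := by
          nlinarith [mul_nonneg hu0 (sq_nonneg (1 - u)), sq_nonneg (1 - u)]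
        simp only [sum_range_succ, range_zero, sum_empty]
        push_cast
        linarith [mul_nonneg hu0 hcubic]
    _ ≤ -log (1 - u) := sum_le_hasSum _ (fun j _ => by positivity) hseries

lemma tangent_le_mul_log {x c : ℝ} (hx : 0 ≤ x) (hc : 0 < c) :
    (1 - log c) * x - c⁻¹ ≤ x * log x := by
  rcases hx.eq_or_lt with rfl | hx
  · simp [hc.le]
  · have hkl := mul_nonneg (inv_nonneg.2 hc.le)
      (InformationTheory.klFun_nonneg (mul_pos hc hx).le)
    rw [InformationTheory.klFun_apply, log_mul hc.ne' hx.ne'] at hkl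
    field_simp at hkl ⊢
    linarith

lemma le_of_hasDerivAt_of_sub_mul_nonneg {s : Set ℝ} (hs : Convex ℝ s) {f f' : ℝ → ℝ} {a x : ℝ}
    (hf : ∀ y ∈ s, HasDerivAt f (f' y) y) (hf' : ∀ y ∈ s, 0 ≤ (y - a) * f' y)
    (ha : a ∈ s) (hx : x ∈ s) : f a ≤ f x := by
  have hmem (t : ℝ) (ht : t ∈ Set.Icc 0 1) : a + t * (x - a) ∈ s :=
    hs.add_smul_sub_mem ha hx ht
  have hderiv (t : ℝ) (ht : t ∈ Set.Icc 0 1) :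
      HasDerivAt (fun t => f (a + t * (x - a))) (f' (a + t * (x - a)) * (x - a)) t :=
    (hf _ (hmem t ht)).comp t ((hasDerivAt_mul_const (x - a)).const_add a)
  obtain ⟨t, ht, hslope⟩ := exists_hasDerivAt_eq_slope _ _ zero_lt_one
    (fun t ht => (hderiv t ht).continuousAt.continuousWithinAt)
    fun t ht => hderiv t (Set.Ioo_subset_Icc_self ht)
  have hsign : 0 ≤ t * (f' (a + t * (x - a)) * (x - a)) :=
    (hf' _ (hmem t (Set.Ioo_subset_Icc_self ht))).trans_eq (by ring)
  have hnonneg := nonneg_of_mul_nonneg_right hsign ht.1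
  rw [hslope] at hnonneg
  simpa using hnonneg

lemma sub_sq_sub_inv_le_log {x : ℝ} (hx : 0 < x) :
    x - 1 / 2 - x ^ 2 / 6 - x⁻¹ / 3 ≤ log x := by
  have hderiv (y : ℝ) (hy : 0 < y) : HasDerivAt (fun y => log y - y + y ^ 2 / 6 + y⁻¹ / 3)
      ((y - 1) ^ 3 / (3 * y ^ 2)) y := by
    refine ((((hasDerivAt_log hy.ne').sub (hasDerivAt_id y)).add
      ((hasDerivAt_pow 2 y).div_const 6)).add ((hasDerivAt_inv hy.ne').div_const 3)).congr_deriv ?_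
    push_cast
    field_simp
    ring
  have hsign (y : ℝ) (hy : 0 < y) : 0 ≤ (y - 1) * ((y - 1) ^ 3 / (3 * y ^ 2)) := by
    have hfour : (y - 1) * ((y - 1) ^ 3 / (3 * y ^ 2)) = ((y - 1) ^ 2) ^ 2 / (3 * y ^ 2) := by ring
    rw [hfour]
    positivity
  have hmin := le_of_hasDerivAt_of_sub_mul_nonneg (convex_Ioi 0) hderiv hsign
    (Set.mem_Ioi.2 one_pos) hx
  simp only [log_one, inv_one, one_pow] at hmin
  linarith

lemma cubic_le_mul_log {x : ℝ} (hx : 0 ≤ x) :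
    (x - 1) + (x - 1) ^ 2 / 2 - (x - 1) ^ 3 / 6 ≤ x * log x := by
  rcases hx.eq_or_lt with rfl | hx
  · norm_num
  · calc (x - 1) + (x - 1) ^ 2 / 2 - (x - 1) ^ 3 / 6
        = x * (x - 1 / 2 - x ^ 2 / 6 - x⁻¹ / 3) := by field_simp; ring
      _ ≤ x * log x := mul_le_mul_of_nonneg_left (sub_sq_sub_inv_le_log hx) hx.le

end RealInequalities

section Bias

open Finset

variable {k n : ℕ} {P : Fin k → ℝ}

variable (n P) in
/-- The ratio of the empirical frequency `N i / n` to the probability `P i`, that is the density at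
`i` of the empirical distribution with respect to `P`. It is `0` when `P i = 0`. -/
def empiricalRatio (i : Fin k) (N : Fin k → ℕ) : ℝ := N i / (n * P i)

lemma empiricalRatio_nonneg {i : Fin k} (hPi : 0 ≤ P i) (N : Fin k → ℕ) :
    0 ≤ empiricalRatio n P i N := by
  unfold empiricalRatio
  positivity

lemma entropy_eq_sum_negMulLog (P : Fin k → ℝ) : entropy P = ∑ i, negMulLog (P i) := by
  simp [entropy, negMulLog]

lemma plugIn_eq_sum_negMulLog (n : ℕ) (N : Fin k → ℕ) :
    plugIn n N = ∑ i, negMulLog ((N i : ℝ) / n) := by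
  simp only [plugIn, negMulLog, ← inv_div (N _ : ℝ), log_inv, mul_neg, neg_mul]

lemma multinomialExpectation_empiricalRatio (hP : ∑ i, P i = 1) (hn : n ≠ 0) {i : Fin k}
    (hPi : P i ≠ 0) : multinomialExpectation n P (empiricalRatio n P i) = 1 := by
  have hratio : empiricalRatio n P i = (n * P i)⁻¹ • fun N : Fin k → ℕ => (N i : ℝ) := by
    ext N
    simp only [empiricalRatio, Pi.smul_apply, smul_eq_mul, div_eq_inv_mul]
  rw [hratio, map_smul, multinomialExpectation_count hP, smul_eq_mul, inv_mul_cancel₀]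
  exact mul_ne_zero (Nat.cast_ne_zero.2 hn) hPi

lemma multinomialExpectation_negMulLog_of_eq_zero {i : Fin k} (hPi : P i = 0) :
    multinomialExpectation n P (fun N => negMulLog ((N i : ℝ) / n)) = 0 := by
  rw [multinomialExpectation_apply]
  refine sum_eq_zero fun N _ => ?_
  rcases eq_or_ne (N i) 0 with hNi | hNi
  · simp [hNi]
  · rw [multinomialPMF_eq_zero_of_apply_eq_zero hPi hNi, zero_mul]

lemma negMulLog_sub_multinomialExpectation (hP : ∑ i, P i = 1) (hn : n ≠ 0) (i : Fin k) :
    negMulLog (P i) - multinomialExpectation n P (fun N => negMulLog ((N i : ℝ) / n)) =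
      P i * multinomialExpectation n P
        (fun N => empiricalRatio n P i N * log (empiricalRatio n P i N)) := by
  rcases eq_or_ne (P i) 0 with hPi | hPi
  · rw [multinomialExpectation_negMulLog_of_eq_zero hPi, hPi]
    simp
  have hsplit : (fun N : Fin k → ℕ => negMulLog ((N i : ℝ) / n)) =
      negMulLog (P i) • empiricalRatio n P i -
        P i • fun N => empiricalRatio n P i N * log (empiricalRatio n P i N) := by
    ext N
    have hfreq : (N i : ℝ) / n = P i * empiricalRatio n P i N := by
      rw [empiricalRatio]
      field_simp
    rw [hfreq, negMulLog_mul]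
    simp only [negMulLog, Pi.sub_apply, Pi.smul_apply, smul_eq_mul]
    ring
  rw [hsplit, map_sub, map_smul, map_smul, multinomialExpectation_empiricalRatio hP hn hPi]
  simp only [smul_eq_mul, mul_one, sub_sub_cancel]

lemma entropy_sub_multinomialExpectation_plugIn (hP : ∑ i, P i = 1) (hn : n ≠ 0) :
    entropy P - multinomialExpectation n P (plugIn n) =
      ∑ i, P i * multinomialExpectation n P
        (fun N => empiricalRatio n P i N * log (empiricalRatio n P i N)) := by
  have hplugIn : plugIn (k := k) n = ∑ i, fun N => negMulLog ((N i : ℝ) / n) := by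
    ext N
    rw [plugIn_eq_sum_negMulLog, Finset.sum_apply]
  simp only [entropy_eq_sum_negMulLog, hplugIn, map_sum, ← sum_sub_distrib,
    negMulLog_sub_multinomialExpectation hP hn]

lemma neg_log_le_multinomialExpectation_ratio_mul_log (hP : P ∈ probVec k) (hn : n ≠ 0)
    {i : Fin k} (hPi : 0 < P i) :
    -log (1 - (1 - P i) ^ n) ≤ multinomialExpectation n P
      (fun N => empiricalRatio n P i N * log (empiricalRatio n P i N)) := by
  obtain ⟨hnonneg, hsum⟩ := hP
  have hPi1 : P i ≤ 1 := hsum ▸ single_le_sum (fun j _ => hnonneg j) (mem_univ i)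
  -- `c` is the probability that `i` is observed.
  set c : ℝ := 1 - (1 - P i) ^ n with hc_def
  have hc : 0 < c := sub_pos.2 (pow_lt_one₀ (by linarith) (by linarith) hn)
  have hpointwise : (1 - log c) • empiricalRatio n P i - c⁻¹ • (1 - fun N => (0 : ℝ) ^ N i) ≤
      fun N => empiricalRatio n P i N * log (empiricalRatio n P i N) := by
    intro N
    rcases eq_or_ne (N i) 0 with hNi | hNi
    · simp [empiricalRatio, hNi]
    · simpa [hNi] using tangent_le_mul_log (empiricalRatio_nonneg hPi.le N) hc
  calc -log c = multinomialExpectation n P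
        ((1 - log c) • empiricalRatio n P i - c⁻¹ • (1 - fun N => (0 : ℝ) ^ N i)) := by
        simp only [map_sub, map_smul, smul_eq_mul, multinomialExpectation_one hsum,
          multinomialExpectation_zero_pow_count hsum, ← hc_def,
          multinomialExpectation_empiricalRatio hsum hn hPi.ne', inv_mul_cancel₀ hc.ne']
        ring
    _ ≤ _ := multinomialExpectation_mono hnonneg hpointwise

lemma cubic_le_multinomialExpectation_ratio_mul_log (hP : P ∈ probVec k) (hn : n ≠ 0)
    {i : Fin k} (hPi : 0 < P i) :
    (1 - P i) / (2 * (n * P i)) - (1 - P i) * (1 - 2 * P i) / (6 * (n * P i) ^ 2) ≤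
      multinomialExpectation n P
        (fun N => empiricalRatio n P i N * log (empiricalRatio n P i N)) := by
  obtain ⟨hnonneg, hsum⟩ := hP
  have hmean : (n : ℝ) * P i ≠ 0 := mul_ne_zero (Nat.cast_ne_zero.2 hn) hPi.ne'
  have hpointwise : (empiricalRatio n P i - 1) +
        ((n * P i) ^ 2 * 2)⁻¹ • (fun N : Fin k → ℕ => (N i - n * P i) ^ 2) -
        ((n * P i) ^ 3 * 6)⁻¹ • (fun N : Fin k → ℕ => (N i - n * P i) ^ 3) ≤
      fun N => empiricalRatio n P i N * log (empiricalRatio n P i N) := by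
    intro N
    refine le_trans (le_of_eq ?_) (cubic_le_mul_log (empiricalRatio_nonneg hPi.le N))
    have hratio : empiricalRatio n P i N - 1 = (N i - n * P i) / (n * P i) := by
      rw [empiricalRatio, sub_div, div_self hmean]
    simp only [Pi.sub_apply, Pi.add_apply, Pi.smul_apply, Pi.one_apply, smul_eq_mul, hratio]
    field_simp
  refine le_trans (le_of_eq ?_) (multinomialExpectation_mono hnonneg hpointwise)
  simp only [map_sub, map_add, map_smul, smul_eq_mul, multinomialExpectation_one hsum,
    multinomialExpectation_empiricalRatio hsum hn hPi.ne',
    multinomialExpectation_count_sub_mean_sq hsum, multinomialExpectation_count_sub_mean_cube hsum]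
  field_simp
  ring

theorem two_mul_sum_mul_pow_le_plugIn_bias (hP : P ∈ probVec k) (hn : n ≠ 0) :
    2 * ∑ i, P i * (1 - P i) ^ (2 * n) ≤
      entropy P - multinomialExpectation n P (plugIn n) := by
  rw [entropy_sub_multinomialExpectation_plugIn hP.2 hn, mul_sum]
  refine sum_le_sum fun i _ => ?_
  rcases (hP.1 i).eq_or_lt with hPi | hPi
  · simp [← hPi]
  have hPi1 : P i ≤ 1 := hP.2 ▸ single_le_sum (fun j _ => hP.1 j) (mem_univ i)
  have hlog := two_mul_sq_le_neg_log_one_sub (u := (1 - P i) ^ n)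
    (pow_nonneg (by linarith) n) (pow_lt_one₀ (by linarith) (by linarith) hn)
  calc 2 * (P i * (1 - P i) ^ (2 * n)) = P i * (2 * ((1 - P i) ^ n) ^ 2) := by ring
    _ ≤ _ := mul_le_mul_of_nonneg_left
      (hlog.trans (neg_log_le_multinomialExpectation_ratio_mul_log hP hn hPi)) hPi.le

theorem sum_sub_sum_le_plugIn_bias (hP : ∑ i, P i = 1) (hpos : ∀ i, 0 < P i) (hn : n ≠ 0) :
    (k - 1) / (2 * n) - (∑ i, (1 - P i) * (1 - 2 * P i) / P i) / (6 * n ^ 2) ≤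
      entropy P - multinomialExpectation n P (plugIn n) := by
  rw [entropy_sub_multinomialExpectation_plugIn hP hn]
  calc (k - 1) / (2 * n) - (∑ i, (1 - P i) * (1 - 2 * P i) / P i) / (6 * n ^ 2)
      = ∑ i, P i * ((1 - P i) / (2 * (n * P i)) -
          (1 - P i) * (1 - 2 * P i) / (6 * (n * P i) ^ 2)) := by
        have hk : (k - 1 : ℝ) = ∑ i, (1 - P i) := by simp [hP]
        rw [hk, sum_div, sum_div, ← sum_sub_distrib]
        refine sum_congr rfl fun i _ => ?_
        have hPi := (hpos i).ne'
        field_simp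
    _ ≤ _ := sum_le_sum fun i _ => mul_le_mul_of_nonneg_left
      (cubic_le_multinomialExpectation_ratio_mul_log ⟨fun j => (hpos j).le, hP⟩ hn (hpos i))
      (hpos i).le

end Bias

section Uniform

open Finset

variable {k : ℕ}

lemma sum_uniform_eq_one (hk : k ≠ 0) : ∑ _i : Fin k, 1 / (k : ℝ) = 1 := by
  simp [hk]

lemma uniform_mem_probVec (hk : k ≠ 0) : (fun _ => 1 / (k : ℝ)) ∈ probVec k :=
  ⟨fun _ => by positivity, sum_uniform_eq_one hk⟩

lemma two_mul_pow_le_plugIn_bias_uniform {n : ℕ} (hk : k ≠ 0) (hn : n ≠ 0) :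
    2 * (1 - 1 / (k : ℝ)) ^ (2 * n) ≤ entropy (fun _ : Fin k => 1 / (k : ℝ)) -
      multinomialExpectation n (fun _ : Fin k => 1 / (k : ℝ)) (plugIn n) := by
  have hbias := two_mul_sum_mul_pow_le_plugIn_bias (uniform_mem_probVec hk) hn
  rwa [← sum_mul, sum_uniform_eq_one hk, one_mul] at hbias

lemma div_mul_le_plugIn_bias_uniform {n : ℕ} (hk : k ≠ 0) (hn : n ≠ 0)
    (hkn : 2 * k ≤ 3 * n + 4) :
    (k : ℝ) / (4 * n) * (1 - 1 / (k : ℝ)) ≤ entropy (fun _ : Fin k => 1 / (k : ℝ)) -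
      multinomialExpectation n (fun _ : Fin k => 1 / (k : ℝ)) (plugIn n) := by
  have hk1 : (1 : ℝ) ≤ k := by exact_mod_cast Nat.one_le_iff_ne_zero.2 hk
  have hkn' : (2 : ℝ) * k ≤ 3 * n + 4 := by exact_mod_cast hkn
  have hsum : ∑ _i : Fin k, (1 - 1 / (k : ℝ)) * (1 - 2 * (1 / k)) / (1 / k) =
      (k - 1) * (k - 2) := by
    rw [sum_const, card_univ, Fintype.card_fin, nsmul_eq_mul]
    field_simp
  have hgap : ((k : ℝ) - 1) / (2 * n) - (k - 1) * (k - 2) / (6 * n ^ 2) -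
      k / (4 * n) * (1 - 1 / k) = (k - 1) * (3 * n + 4 - 2 * k) / (12 * n ^ 2) := by
    field_simp
    ring
  have hgap_nonneg : 0 ≤ ((k : ℝ) - 1) * (3 * n + 4 - 2 * k) / (12 * n ^ 2) :=
    div_nonneg (mul_nonneg (by linarith) (by linarith)) (by positivity)
  have hbias := sum_sub_sum_le_plugIn_bias (sum_uniform_eq_one hk) (fun _ => by positivity) hn
  rw [hsum] at hbias
  linarith

end Uniform

theorem plugin_bias_uniform_general (k n : ℕ) (hk : 1 ≤ k) (hn : 1 ≤ n) :
    2 * (1 - 1 / (k : ℝ)) ^ (2 * n) ≤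
        entropy (fun _ : Fin k => 1 / (k : ℝ)) -
          ∑' N : Fin k → ℕ,
            multinomialPMF n (fun _ : Fin k => 1 / (k : ℝ)) N * plugIn n N ∧
    (2 * k ≤ 3 * n + 4 →
      (k : ℝ) / (4 * n) * (1 - 1 / (k : ℝ)) ≤
        entropy (fun _ : Fin k => 1 / (k : ℝ)) -
          ∑' N : Fin k → ℕ,
            multinomialPMF n (fun _ : Fin k => 1 / (k : ℝ)) N * plugIn n N) := by
  rw [tsum_multinomialPMF_mul]
  exact ⟨two_mul_pow_le_plugIn_bias_uniform (by lia) (by lia),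
    div_mul_le_plugIn_bias_uniform (by lia) (by lia)⟩

/-- lower bound on the bias of the plug-in estimator under the uniform
distribution. -/
theorem plugin_bias_uniform (k n : ℕ) (hk : 2 ≤ k) (hn : 1 ≤ n) :
    (n < k →
      2 * (1 - 1 / (k : ℝ)) ^ (2 * n) ≤
        entropy (fun _ : Fin k => 1 / (k : ℝ)) -
          ∑' N : Fin k → ℕ,
            multinomialPMF n (fun _ : Fin k => 1 / (k : ℝ)) N * plugIn n N) ∧
    (k ≤ n →
      (k : ℝ) / (4 * n) * (1 - 1 / (k : ℝ)) ≤
        entropy (fun _ : Fin k => 1 / (k : ℝ)) -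
          ∑' N : Fin k → ℕ,
            multinomialPMF n (fun _ : Fin k => 1 / (k : ℝ)) N * plugIn n N) := by
  obtain ⟨hsmall, hlarge⟩ := plugin_bias_uniform_general k n (by lia) hn
  exact ⟨fun _ => hsmall, fun hkn => hlarge (by lia)⟩
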